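/- arXiv:1701.03184 — 2 statements merged into one kernel-verified Lean document; each statement's English description precedes it below -/
import Mathlib

section
/- Let R be an artin algebra, let L_1, …, L_{n+1} and M_1, …, M_{n+1} be indecomposable finite-length R-modules, and suppose that for each 1 ≤ j ≤ n the sequence 0 → M_j → M_{j+1} ⊕ L_j → L_{j+1} → 0, with left map (i_j, π_j)^T and right map (π_{j+1}, μ_j), is almost split exact. If the composite μ_n ∘ … ∘ μ_1 is a short embedding, then the composite i_n ∘ … ∘ i_1 is a short embedding. -/
/-!
Write `tp A a` for the pp-type of an element `a` of a finitely generated module `A`, viewed as an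
element of the modular lattice of pp-`1`-formulas up to equivalence. An artin algebra is
noetherian, so this lattice consists exactly of the functors represented by pointed finitely
generated modules: `tp A a ≤ tp B b` holds iff some homomorphism `B → A` sends `b` to `a`, and
`tp A a ⊔ tp B b = tp (A × B) (a, b)`.

Let `ι j` be the composite of the first `j` of the maps `i`, fix `a` in the first of the modules
`M`, let `p = tp (M 0) a` and `c = tp (L 0) (π 0 a)`.

* If `A → B → C` is almost split with left map `f`, then the interval `[tp B (f a), tp A a]` has
  length at most `1` (`IsAlmostSplitSequence.lenLE_one`): a type below `tp A a` is `tp X (q a)` for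
  some `q : A → X`, and `q` is either a split monomorphism or factors through `f`
  (`IsAlmostSplitSequence.exists_factor`, which uses that `End A` is local).
* Apply this to the `j`-th sequence and the element `ι j a`. By exactness
  `π j (ι j a) = ± μ … μ (π 0 a)`, whose type is below `c`; so joining with `c` shows that
  `[tp (M (j + 1)) (ι (j + 1) a) ⊔ c, tp (M j) (ι j a) ⊔ c]` has length at most `1`. Summing over
  `j < n`, and using `c ≤ p`, the interval `[tp (M n) (ι n a) ⊔ c, p]` has length at most `n`.
* By modularity the remaining part `[tp (M n) (ι n a), tp (M n) (ι n a) ⊔ c]` is isomorphic to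
  `[tp (M n) (ι n a) ⊓ c, c]`. Since `π n (ι n a) = ± μ … μ (π 0 a)`, the latter is contained in
  `[tp (L n) (μ … μ (π 0 a)), c]`, whose length is bounded because `μ … μ` is short.

Injectivity of `ι n` follows from the same identities and the injectivity of `(i j, π j)`.
-/

universe u v

/-- A pp-`n`-formula over the ring `R`: `∃ y₁ … y_{nex}` such that the `neq` homogeneous
linear equations encoded by the matrix `H` hold of `(x, y)`. -/
structure PPFormula (R : Type u) [Ring R] (n : ℕ) : Type u where
  nex : ℕ
  neq : ℕ
  H : Matrix (Fin n ⊕ Fin nex) (Fin neq) R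

namespace PPFormula

variable {R : Type u} [Ring R] {n : ℕ}

/-- The solution set of a pp-formula in a module. -/
def Holds (φ : PPFormula R n) (M : Type v) [AddCommGroup M] [Module R M]
    (x : Fin n → M) : Prop :=
  ∃ y : Fin φ.nex → M, ∀ j : Fin φ.neq,
    (∑ i, φ.H (Sum.inl i) j • x i) + (∑ l, φ.H (Sum.inr l) j • y l) = 0

/-- The pp-definable subgroup `φ(M)` attached to a pp-1-formula. -/
def sub (φ : PPFormula R 1) (M : Type v) [AddCommGroup M] [Module R M] :
    AddSubgroup M where
  carrier := {m : M | φ.Holds M (fun _ => m)}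
  zero_mem' := ⟨0, fun j => by simp⟩
  add_mem' := by
    rintro a b ⟨y, hy⟩ ⟨z, hz⟩
    refine ⟨y + z, fun j => ?_⟩
    have h := congrArg₂ (· + ·) (hy j) (hz j)
    simp only [Pi.add_apply, smul_add, Finset.sum_add_distrib] at *
    rw [add_zero] at h
    rw [← h]; abel
  neg_mem' := by
    rintro a ⟨y, hy⟩
    refine ⟨-y, fun j => ?_⟩
    have h := congrArg (fun t => -t) (hy j)
    simp only [Pi.neg_apply, smul_neg, Finset.sum_neg_distrib, neg_add_rev, neg_zero] at *
    rw [← h]; abel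

/-- Implication ordering on pp-formulas: `φ ≤ ψ` iff in every module every solution of `φ`
is a solution of `ψ`. -/
def Le (φ ψ : PPFormula R n) : Prop :=
  ∀ (M : Type u) [AddCommGroup M] [Module R M] (x : Fin n → M), φ.Holds M x → ψ.Holds M x

/-- `φ` generates the pp-type of `a` in `M`. -/
def Generates (φ : PPFormula R 1) (M : Type u) [AddCommGroup M] [Module R M]
    (a : M) : Prop :=
  a ∈ φ.sub M ∧ ∀ ψ : PPFormula R 1, a ∈ ψ.sub M → φ.Le ψ

/-- The interval `[ψ, φ]` in the lattice of pp-1-formulas has length at most `N`: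
there is no strictly ascending chain of length `> N` between `ψ` and `φ`. -/
def IntervalLengthLE (ψ φ : PPFormula R 1) (N : ℕ) : Prop :=
  ∀ (m : ℕ) (c : Fin (m + 1) → PPFormula R 1),
    (∀ i, ψ.Le (c i) ∧ (c i).Le φ) →
    (∀ i : Fin m, (c i.castSucc).Le (c i.succ) ∧ ¬ (c i.succ).Le (c i.castSucc)) →
    m ≤ N

end PPFormula

section Defs

variable (R : Type u) [Ring R]

/-- An embedding of modules is short of length `N` if for every element `a` of the source,
any generator of the pp-type of `a` and any generator of the pp-type of its image bound an
interval of length at most `N` in the lattice of pp-formulas. -/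
def IsShortOfLength {M N : Type u} [AddCommGroup M] [Module R M] [AddCommGroup N]
    [Module R N] (f : M →ₗ[R] N) (B : ℕ) : Prop :=
  Function.Injective f ∧
    ∀ (a : M) (φ ψ : PPFormula R 1), φ.Generates M a → ψ.Generates N (f a) →
      PPFormula.IntervalLengthLE ψ φ B

/-- A short embedding of modules. -/
def IsShortEmbedding {M N : Type u} [AddCommGroup M] [Module R M] [AddCommGroup N]
    [Module R N] (f : M →ₗ[R] N) : Prop :=
  ∃ B : ℕ, IsShortOfLength R f B

/-- A pure embedding: an injective linear map reflecting all pp-formulas. -/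
def IsPureEmbedding {M N : Type u} [AddCommGroup M] [Module R M] [AddCommGroup N]
    [Module R N] (f : M →ₗ[R] N) : Prop :=
  Function.Injective f ∧
    ∀ (n : ℕ) (φ : PPFormula R n) (x : Fin n → M), φ.Holds N (f ∘ x) → φ.Holds M x

/-- A module is pure-injective if it is injective over all pure embeddings. -/
def IsPureInjective (M : Type u) [AddCommGroup M] [Module R M] : Prop :=
  ∀ (A B : Type u) [AddCommGroup A] [Module R A] [AddCommGroup B] [Module R B]
    (f : A →ₗ[R] B), IsPureEmbedding R f →
      ∀ g : A →ₗ[R] M, ∃ h : B →ₗ[R] M, h.comp f = g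

/-- A module is Σ-pure-injective iff it has no infinite properly descending chain of
pp-definable subgroups, i.e. every descending chain stabilizes. -/
def IsSigmaPureInjective (M : Type u) [AddCommGroup M] [Module R M] : Prop :=
  ∀ c : ℕ → PPFormula R 1, (∀ i, ((c (i + 1)).sub M : AddSubgroup M) ≤ (c i).sub M) →
    ∃ N : ℕ, ∀ i, N ≤ i → ((c i).sub M : AddSubgroup M) = (c N).sub M

/-- The ascending chain condition on pp-definable subgroups. -/
def HasACCppSubgroups (M : Type u) [AddCommGroup M] [Module R M] : Prop :=
  ∀ c : ℕ → PPFormula R 1, (∀ i, ((c i).sub M : AddSubgroup M) ≤ (c (i + 1)).sub M) →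
    ∃ N : ℕ, ∀ i, N ≤ i → ((c i).sub M : AddSubgroup M) = (c N).sub M

/-- The lattice of pp-definable subgroups of `M` has finite length. -/
def HasFiniteLengthPPLattice (M : Type u) [AddCommGroup M] [Module R M] : Prop :=
  ∃ B : ℕ, ∀ (m : ℕ) (c : Fin (m + 1) → PPFormula R 1),
    (∀ i : Fin m, ((c i.castSucc).sub M : AddSubgroup M) < (c i.succ).sub M) → m ≤ B

/-- A module is indecomposable: non-zero, and `0`, `id` are its only idempotent
endomorphisms. -/
def IsIndecomposableModule (M : Type v) [AddCommGroup M] [Module R M] : Prop :=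
  (∃ x : M, x ≠ 0) ∧ ∀ e : M →ₗ[R] M, e ∘ₗ e = e → e = 0 ∨ e = LinearMap.id

/-- A bundled module over `R`. -/
structure ModuleBdl (R : Type u) [Ring R] : Type (u + 1) where
  carrier : Type u
  [acg : AddCommGroup carrier]
  [mod : Module R carrier]

attribute [instance] ModuleBdl.acg ModuleBdl.mod

/-- `N` belongs to the Ziegler closure of the set `S` of modules: `N` is an indecomposable
pure-injective module such that every basic Ziegler-open neighbourhood `(φ/ψ)` of `N` meets
`S`. -/
def MemZieglerClosure (S : Set (ModuleBdl R)) (N : ModuleBdl R) : Prop :=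
  IsIndecomposableModule R N.carrier ∧ IsPureInjective R N.carrier ∧
    ∀ φ ψ : PPFormula R 1, ψ.Le φ →
      (ψ.sub N.carrier : AddSubgroup N.carrier) ≠ φ.sub N.carrier →
      ∃ M ∈ S, (ψ.sub M.carrier : AddSubgroup M.carrier) ≠ φ.sub M.carrier

/-- A generic module: indecomposable with pp-lattice of finite length. -/
def IsGenericModule (M : Type u) [AddCommGroup M] [Module R M] : Prop :=
  IsIndecomposableModule R M ∧ HasFiniteLengthPPLattice R M

end Defs

/-- A short exact sequence `0 → A →f B →g C → 0` of modules is almost split if it does not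
split, `A` and `C` are indecomposable, every non-split epimorphism `X → C` factors through
`g`, and every non-split monomorphism `A → X` factors through `f`. -/
def IsAlmostSplitSequence (R : Type u) [Ring R] {A B C : Type u}
    [AddCommGroup A] [Module R A] [AddCommGroup B] [Module R B]
    [AddCommGroup C] [Module R C] (f : A →ₗ[R] B) (g : B →ₗ[R] C) : Prop :=
  Function.Injective f ∧ Function.Surjective g ∧ LinearMap.ker g = LinearMap.range f ∧
    (¬ ∃ s : C →ₗ[R] B, g ∘ₗ s = LinearMap.id) ∧
    IsIndecomposableModule R A ∧ IsIndecomposableModule R C ∧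
    (∀ (X : Type u) [AddCommGroup X] [Module R X] (h : X →ₗ[R] C),
      Function.Surjective h → (¬ ∃ s : C →ₗ[R] X, h ∘ₗ s = LinearMap.id) →
        ∃ t : X →ₗ[R] B, g ∘ₗ t = h) ∧
    (∀ (X : Type u) [AddCommGroup X] [Module R X] (h : A →ₗ[R] X),
      Function.Injective h → (¬ ∃ r : X →ₗ[R] A, r ∘ₗ h = LinearMap.id) →
        ∃ t : B →ₗ[R] X, t ∘ₗ f = h)

/-- The composite of the first `n` maps of a chain of module maps. -/
def compChain {R : Type u} [Ring R] {M : ℕ → ModuleBdl R}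
    (f : ∀ j : ℕ, (M j).carrier →ₗ[R] (M (j + 1)).carrier) :
    ∀ n : ℕ, (M 0).carrier →ₗ[R] (M n).carrier
  | 0 => LinearMap.id
  | n + 1 => (f n).comp (compChain f n)

/-! ### Lengths of intervals in modular lattices -/

/-- The interval `[a, b]` has length at most `N`: a strictly increasing sequence lying between
`a` and `b` has at most `N` steps. -/
def LenLE {α : Type*} [Lattice α] (a b : α) (N : ℕ) : Prop :=
  ∀ s : LTSeries α, a ≤ s.head → s.last ≤ b → s.length ≤ N

section ModularLattice

variable {α : Type*} [Lattice α]

theorem LenLE.mono {a b a' b' : α} {N : ℕ} (h : LenLE a b N) (ha : a ≤ a') (hb : b' ≤ b) :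
    LenLE a' b' N :=
  fun s h1 h2 => h s (ha.trans h1) (h2.trans hb)

theorem lenLE_self (a : α) : LenLE a a 0 := by
  intro s h1 h2
  by_contra h
  have h0 : (0 : Fin (s.length + 1)) < Fin.last _ := by
    rw [Fin.lt_def]; simpa using Nat.pos_of_ne_zero (by simpa using h)
  have := s.strictMono h0
  exact absurd (this.trans_le (h2.trans h1)) (lt_irrefl _)

/-- An interval in which every element is an endpoint has length at most `1`. -/
theorem lenLE_one {a b : α} (h : ∀ x, x ≤ b → x = b ∨ x ≤ a) : LenLE a b 1 := by
  intro s h1 h2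
  by_contra! hl
  have h01 : s ⟨0, by omega⟩ < s ⟨1, by omega⟩ := s.strictMono (by simp [Fin.lt_def])
  have h12 : s ⟨1, by omega⟩ < s (Fin.last _) := s.strictMono (by simpa [Fin.lt_def] using hl)
  rcases h _ (h12.le.trans h2) with h' | h'
  · exact absurd (h12.trans_le h2) (by rw [h']; exact lt_irrefl _)
  · exact absurd (h01.trans_le (h'.trans h1)) (lt_irrefl _)

variable [IsModularLattice α]

/-- A strict step `x < y` remains strict after applying `· ⊓ b` or after applying `· ⊔ b`, so the
steps of a chain are shared out between its meets with `b` and its joins with `b`. -/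
theorem LTSeries.exists_inf_sup (b : α) (s : LTSeries α) :
    ∃ t u : LTSeries α, t.head = s.head ⊓ b ∧ t.last = s.last ⊓ b ∧
      u.head = s.head ⊔ b ∧ u.last = s.last ⊔ b ∧ s.length ≤ t.length + u.length := by
  induction s using RelSeries.inductionOn' with
  | singleton x =>
    exact ⟨RelSeries.singleton _ (x ⊓ b), RelSeries.singleton _ (x ⊔ b), rfl, rfl, rfl, rfl,
      Nat.zero_le _⟩
  | snoc p x hx ih =>
    obtain ⟨t, u, h1, h2, h3, h4, h5⟩ := ih
    have hx' : p.last < x := hx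
    have hlen : (p.snoc x hx).length = p.length + 1 := rfl
    rw [hlen, RelSeries.head_snoc, RelSeries.last_snoc]
    have hi : p.last ⊓ b ≤ x ⊓ b := inf_le_inf_right b hx'.le
    have hs : p.last ⊔ b ≤ x ⊔ b := sup_le_sup_right hx'.le b
    rcases hi.lt_or_eq with hi | hi
    · have hi' : t.last < x ⊓ b := h2 ▸ hi
      rcases hs.lt_or_eq with hs | hs
      · have hs' : u.last < x ⊔ b := h4 ▸ hs
        refine ⟨t.snoc _ hi', u.snoc _ hs', ?_, ?_, ?_, ?_, ?_⟩
        · simpa using h1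
        · simp
        · simpa using h3
        · simp
        · change p.length + 1 ≤ (t.length + 1) + (u.length + 1); omega
      · refine ⟨t.snoc _ hi', u, ?_, ?_, h3, h4.trans hs, ?_⟩
        · simpa using h1
        · simp
        · change p.length + 1 ≤ (t.length + 1) + u.length; omega
    · rcases hs.lt_or_eq with hs | hs
      · have hs' : u.last < x ⊔ b := h4 ▸ hs
        refine ⟨t, u.snoc _ hs', h1, h2.trans hi, ?_, ?_, ?_⟩
        · simpa using h3
        · simp
        · change p.length + 1 ≤ t.length + (u.length + 1); omega
      · exact absurd (eq_of_le_of_inf_le_of_sup_le hx'.le hi.ge hs.ge) hx'.ne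

theorem LenLE.trans {a b c : α} {p q : ℕ} (h : LenLE a b p) (h' : LenLE b c q)
    (hab : a ≤ b) (hbc : b ≤ c) : LenLE a c (p + q) := by
  intro s h1 h2
  obtain ⟨t, u, e1, e2, e3, e4, e5⟩ := s.exists_inf_sup b
  have := h t (e1 ▸ le_inf h1 hab) (e2 ▸ inf_le_right)
  have := h' u (e3 ▸ le_sup_right) (e4 ▸ sup_le h2 hbc)
  omega

/-- The intervals `[a ⊓ b, b]` and `[a, a ⊔ b]` are isomorphic; this is the half of that fact
which bounds the length of the second. -/
theorem LenLE.sup_of_inf {a b : α} {N : ℕ} (h : LenLE (a ⊓ b) b N) : LenLE a (a ⊔ b) N := by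
  intro s h1 h2
  obtain ⟨t, u, e1, e2, e3, e4, e5⟩ := s.exists_inf_sup b
  have := h t (e1 ▸ inf_le_inf_right b h1) (e2 ▸ inf_le_right)
  have := lenLE_self (a ⊔ b) u (e3 ▸ sup_le_sup_right h1 b) (e4 ▸ sup_le h2 le_sup_right)
  omega

theorem LenLE.sup_right {a b : α} {N : ℕ} (h : LenLE a b N) (hab : a ≤ b) (c : α) :
    LenLE (a ⊔ c) (b ⊔ c) N := by
  have h1 : LenLE ((a ⊔ c) ⊓ b) b N := h.mono (le_inf le_sup_left hab) le_rfl
  refine h1.sup_of_inf.mono le_rfl ?_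
  exact sup_le le_sup_right (le_sup_right.trans le_sup_left)

end ModularLattice

/-! ### The lattice of pp-functors -/

/-- Families of subgroups, one for each module, form a modular lattice under pointwise inclusion. -/
instance familyModular (R : Type u) [Ring R] :
    IsModularLattice (∀ M : ModuleBdl R, AddSubgroup M.carrier) :=
  ⟨fun {_} _ {_} hxz M => IsModularLattice.sup_inf_le_assoc_of_le _ (hxz M)⟩

section PPFunctors

variable {R : Type u} [Ring R]

/-- The functor (on objects) represented by the pointed module `(A, a)`: it sends `M` to the
subgroup of all images of `a` under homomorphisms `A → M`. -/
def ptFun (A : Type u) [AddCommGroup A] [Module R A] (a : A) :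
    ∀ M : ModuleBdl R, AddSubgroup M.carrier :=
  fun M =>
    { carrier := {x | ∃ h : A →ₗ[R] M.carrier, h a = x}
      zero_mem' := ⟨0, rfl⟩
      add_mem' := by
        rintro _ _ ⟨h, rfl⟩ ⟨h', rfl⟩
        exact ⟨h + h', rfl⟩
      neg_mem' := by
        rintro _ ⟨h, rfl⟩
        exact ⟨-h, rfl⟩ }

theorem mem_ptFun {A : Type u} [AddCommGroup A] [Module R A] {a : A} {M : ModuleBdl R}
    {x : M.carrier} : x ∈ ptFun A a M ↔ ∃ h : A →ₗ[R] M.carrier, h a = x := Iff.rfl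

theorem ptFun_le_iff {A B : Type u} [AddCommGroup A] [Module R A] [AddCommGroup B] [Module R B]
    {a : A} {b : B} :
    ptFun (R := R) A a ≤ ptFun B b ↔ ∃ h : B →ₗ[R] A, h b = a := by
  constructor
  · intro h
    exact h ⟨A⟩ (mem_ptFun.2 ⟨LinearMap.id, rfl⟩)
  · rintro ⟨h, rfl⟩ M x ⟨g, rfl⟩
    exact ⟨g ∘ₗ h, rfl⟩

theorem ptFun_sup {A B : Type u} [AddCommGroup A] [Module R A] [AddCommGroup B] [Module R B]
    (a : A) (b : B) : ptFun (R := R) A a ⊔ ptFun B b = ptFun (A × B) (a, b) := by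
  apply le_antisymm
  · exact sup_le (ptFun_le_iff.2 ⟨LinearMap.fst R A B, rfl⟩)
      (ptFun_le_iff.2 ⟨LinearMap.snd R A B, rfl⟩)
  · rintro M x ⟨h, rfl⟩
    refine AddSubgroup.mem_sup.2 ⟨_, ⟨h ∘ₗ LinearMap.inl R A B, rfl⟩, _,
      ⟨h ∘ₗ LinearMap.inr R A B, rfl⟩, ?_⟩
    simp [← map_add]

/-- The meet of two represented functors is represented by the pushout of the pointed modules. -/
theorem ptFun_inf {A B : Type u} [AddCommGroup A] [Module R A] [AddCommGroup B] [Module R B]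
    (a : A) (b : B) : ptFun (R := R) A a ⊓ ptFun B b =
      ptFun ((A × B) ⧸ (R ∙ ((a, -b) : A × B))) (Submodule.Quotient.mk (a, 0)) := by
  apply le_antisymm
  · rintro M x ⟨⟨h, rfl⟩, ⟨g, hg⟩⟩
    refine ⟨Submodule.liftQ _ (h.coprod g) ?_, ?_⟩
    · rw [Submodule.span_singleton_le_iff_mem, LinearMap.mem_ker]
      simp [hg]
    · erw [Submodule.liftQ_apply]; simp
  · refine le_inf (ptFun_le_iff.2 ⟨Submodule.mkQ _ ∘ₗ LinearMap.inl R A B, rfl⟩)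
      (ptFun_le_iff.2 ⟨Submodule.mkQ _ ∘ₗ LinearMap.inr R A B, ?_⟩)
    refine ((Submodule.Quotient.eq _).2 ?_).symm
    simp

variable (R) in
/-- The lattice of pp-functors: the functors represented by pointed finitely generated modules.
Over a noetherian ring these are exactly the functors defined by pp-`1`-formulas
(`PPFormula.exists_free_realization` and `PPFormula.exists_of_pointed`). -/
def ppLattice : Sublattice (∀ M : ModuleBdl R, AddSubgroup M.carrier) where
  carrier := {F | ∃ (A : ModuleBdl R) (a : A.carrier), Module.Finite R A.carrier ∧
    F = ptFun A.carrier a}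
  supClosed' := by
    rintro _ ⟨A, a, hA, rfl⟩ _ ⟨B, b, hB, rfl⟩
    exact ⟨⟨A.carrier × B.carrier⟩, (a, b), inferInstanceAs (Module.Finite R (_ × _)),
      ptFun_sup a b⟩
  infClosed' := by
    rintro _ ⟨A, a, hA, rfl⟩ _ ⟨B, b, hB, rfl⟩
    exact ⟨⟨(A.carrier × B.carrier) ⧸ (R ∙ ((a, -b) : A.carrier × B.carrier))⟩, _,
      inferInstanceAs (Module.Finite R (_ ⧸ _)), ptFun_inf a b⟩

instance ppLattice_modular : IsModularLattice (ppLattice R) :=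
  ⟨fun {x} y {z} hxz =>
    IsModularLattice.sup_inf_le_assoc_of_le (x := x.1) y.1 (z := z.1) hxz⟩

/-- The pp-type of `a` in the finitely generated module `A`, as an element of the lattice of
pp-functors. -/
def tp (A : Type u) [AddCommGroup A] [Module R A] [Module.Finite R A] (a : A) : ppLattice R :=
  ⟨ptFun A a, ⟨A⟩, a, ‹_›, rfl⟩

section

variable {A B : Type u} [AddCommGroup A] [Module R A] [Module.Finite R A]
  [AddCommGroup B] [Module R B] [Module.Finite R B]

theorem tp_le_iff {a : A} {b : B} : tp (R := R) A a ≤ tp B b ↔ ∃ h : B →ₗ[R] A, h b = a :=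
  ptFun_le_iff

theorem tp_map_le (h : B →ₗ[R] A) (b : B) : tp (R := R) A (h b) ≤ tp B b :=
  tp_le_iff.2 ⟨h, rfl⟩

theorem tp_sup (a : A) (b : B) : tp (R := R) A a ⊔ tp B b = tp (A × B) (a, b) :=
  Subtype.ext (ptFun_sup a b)

theorem tp_neg (a : A) : tp (R := R) A (-a) = tp A a :=
  le_antisymm (tp_le_iff.2 ⟨-LinearMap.id, rfl⟩) (tp_le_iff.2 ⟨-LinearMap.id, by simp⟩)

theorem exists_tp_eq (F : ppLattice R) :
    ∃ (A : ModuleBdl R) (_ : Module.Finite R A.carrier) (a : A.carrier), F = tp A.carrier a := by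
  obtain ⟨_, A, a, hA, rfl⟩ := F
  exact ⟨A, hA, a, rfl⟩

end

/-! ### pp-formulas and pointed modules -/

namespace PPFormula

/-- The functor defined by a pp-formula. -/
def toFun (φ : PPFormula R 1) : ∀ M : ModuleBdl R, AddSubgroup M.carrier :=
  fun M => φ.sub M.carrier

theorem le_iff_toFun {φ ψ : PPFormula R 1} : φ.Le ψ ↔ φ.toFun ≤ ψ.toFun := by
  constructor
  · intro h M x hx
    exact h M.carrier _ hx
  · intro h M _ _ x hx
    have e : x = fun _ => x 0 := by
      ext i; rw [Subsingleton.elim i 0]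
    rw [e] at hx ⊢
    exact h ⟨M⟩ hx

/-- Every pp-formula has a free realization: the module with generators the variables of the
formula and relations its equations, pointed at the free variable. -/
theorem exists_free_realization (φ : PPFormula R 1) : φ.toFun ∈ ppLattice R := by
  let N : Submodule R (Fin 1 ⊕ Fin φ.nex → R) :=
    Submodule.span R (Set.range fun j i => φ.H i j)
  refine ⟨⟨(Fin 1 ⊕ Fin φ.nex → R) ⧸ N⟩, N.mkQ (Pi.single (Sum.inl 0) 1),
    inferInstanceAs (Module.Finite R (_ ⧸ N)), ?_⟩
  funext M
  ext x
  constructor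
  · rintro ⟨y, hy⟩
    let g := Fintype.linearCombination R (Sum.elim (fun _ => x) y : Fin 1 ⊕ Fin φ.nex → M.carrier)
    refine ⟨N.liftQ g ?_, ?_⟩
    · rw [Submodule.span_le]
      rintro _ ⟨j, rfl⟩
      simpa [g, Fintype.linearCombination_apply] using hy j
    · erw [Submodule.liftQ_apply]
      simp [g, Fintype.linearCombination_apply, Pi.single_apply]
  · rintro ⟨h, rfl⟩
    refine ⟨fun l => h (N.mkQ (Pi.single (Sum.inr l) 1)), fun j => ?_⟩
    have hN : N.mkQ (fun i => φ.H i j) = 0 :=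
      (Submodule.Quotient.mk_eq_zero N).2 (Submodule.subset_span ⟨j, rfl⟩)
    have hs : (fun i => φ.H i j) = ∑ i, φ.H i j • (Pi.single i 1 : Fin 1 ⊕ Fin φ.nex → R) :=
      pi_eq_sum_univ' _
    have := congrArg h hN
    rw [hs, map_zero, map_sum, map_sum, Fintype.sum_sum_type] at this
    simpa only [map_smul, Fin.sum_univ_one, Fin.isValue] using this

/-- Over a left noetherian ring every pointed finitely generated module is the free realization of
a pp-formula, obtained from a finite presentation. -/
theorem exists_of_pointed [IsNoetherianRing R] (A : Type u) [AddCommGroup A] [Module R A]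
    [Module.Finite R A] (a : A) : ∃ φ : PPFormula R 1, φ.toFun = ptFun A a := by
  obtain ⟨n, f, hf⟩ := Module.Finite.exists_fin' R A
  obtain ⟨v, rfl⟩ := hf a
  obtain ⟨m, r, hr⟩ := Submodule.fg_iff_exists_fin_generating_family.1
    (IsNoetherian.noetherian (LinearMap.ker f))
  -- The equations are `-x + ∑ l, v l • y l = 0` and the relations `∑ l, r j l • y l = 0`.
  let φ : PPFormula R 1 :=
    { nex := n
      neq := m + 1
      H := fun i j => Sum.elim (fun _ => (Fin.cons (-1) (fun _ => 0) : Fin (m + 1) → R) j)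
        (fun l => (Fin.cons (v l) (fun j' => r j' l) : Fin (m + 1) → R) j) i }
  refine ⟨φ, ?_⟩
  funext M
  ext x
  have key : x ∈ φ.toFun M ↔ ∃ y : Fin n → M.carrier,
      (∑ l, v l • y l = x) ∧ ∀ j, ∑ l, r j l • y l = 0 := by
    refine exists_congr fun y => ?_
    change (∀ j : Fin (m + 1), _) ↔ _
    rw [Fin.forall_fin_succ]
    simp only [φ, Fin.cons_zero, Fin.cons_succ, Sum.elim_inl, Sum.elim_inr, Fin.sum_univ_one, neg_smul,
      one_smul, zero_smul, zero_add, neg_add_eq_zero]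
    rw [eq_comm]
  rw [key, mem_ptFun]
  constructor
  · rintro ⟨y, hy1, hy2⟩
    let g := Fintype.linearCombination R y
    have hk : LinearMap.ker f ≤ LinearMap.ker g := by
      rw [← hr, Submodule.span_le]
      rintro _ ⟨j, rfl⟩
      simpa [g, Fintype.linearCombination_apply] using hy2 j
    refine ⟨(LinearMap.ker f).liftQ g hk ∘ₗ (f.quotKerEquivOfSurjective hf).symm.toLinearMap, ?_⟩
    have : (f.quotKerEquivOfSurjective hf).symm (f v) = (LinearMap.ker f).mkQ v := by
      rw [LinearEquiv.symm_apply_eq]; rfl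
    simp only [LinearMap.comp_apply, LinearEquiv.coe_coe, this]
    simpa [g, Fintype.linearCombination_apply] using hy1
  · rintro ⟨h, rfl⟩
    have hs : ∀ w : Fin n → R, ∑ l, w l • h (f (Pi.single l 1)) = h (f w) := by
      intro w
      conv_rhs => rw [pi_eq_sum_univ' w]
      simp
    refine ⟨fun l => h (f (Pi.single l 1)), hs v, fun j => ?_⟩
    have : r j ∈ LinearMap.ker f := hr ▸ Submodule.subset_span ⟨j, rfl⟩
    rw [hs, LinearMap.mem_ker.1 this, map_zero]

theorem generates_iff [IsNoetherianRing R] {A : Type u} [AddCommGroup A] [Module R A]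
    [Module.Finite R A] {a : A} {φ : PPFormula R 1} :
    φ.Generates A a ↔ φ.toFun = ptFun A a := by
  have hle : ∀ ψ : PPFormula R 1, a ∈ ψ.sub A ↔ ptFun A a ≤ ψ.toFun := by
    intro ψ
    obtain ⟨B, b, hB, e⟩ := exists_free_realization ψ
    change a ∈ ψ.toFun ⟨A⟩ ↔ _
    rw [e, ptFun_le_iff]; rfl
  constructor
  · rintro ⟨h1, h2⟩
    obtain ⟨χ, hχ⟩ := exists_of_pointed A a (R := R)
    refine le_antisymm ?_ ((hle φ).1 h1)
    rw [← hχ]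
    exact le_iff_toFun.1 (h2 χ ((hle χ).2 hχ.ge))
  · intro h
    exact ⟨(hle φ).2 h.ge, fun ψ hψ => le_iff_toFun.2 (h.le.trans ((hle ψ).1 hψ))⟩

/-- The element of the lattice of pp-functors given by a pp-formula. -/
def toPP (φ : PPFormula R 1) : ppLattice R := ⟨φ.toFun, exists_free_realization φ⟩

theorem toPP_surjective [IsNoetherianRing R] : Function.Surjective (toPP (R := R)) := by
  rintro ⟨_, A, a, hA, rfl⟩
  obtain ⟨φ, hφ⟩ := exists_of_pointed A.carrier a (R := R)
  exact ⟨φ, Subtype.ext hφ⟩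

theorem intervalLengthLE_iff [IsNoetherianRing R] {ψ φ : PPFormula R 1} {N : ℕ} :
    IntervalLengthLE ψ φ N ↔ LenLE ψ.toPP φ.toPP N := by
  have hle : ∀ {χ χ' : PPFormula R 1}, χ.Le χ' ↔ χ.toPP ≤ χ'.toPP := le_iff_toFun
  constructor
  · intro h s h1 h2
    choose c hc using fun i => toPP_surjective (s i)
    refine h s.length c (fun i => ?_) (fun i => ?_)
    · rw [hle, hle, hc]
      exact ⟨h1.trans (s.monotone (Fin.zero_le i)), (s.monotone (Fin.le_last i)).trans h2⟩
    · rw [hle, hle, hc, hc, ← lt_iff_le_not_ge]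
      exact s.step i
  · intro h m c h1 h2
    refine h ⟨m, fun i => (c i).toPP, fun i => ?_⟩ (hle.1 (h1 0).1) (hle.1 (h1 _).2)
    have := h2 i
    rw [hle, hle, ← lt_iff_le_not_ge] at this
    exact this

end PPFormula

/-- Shortness expressed in the lattice of pp-functors; over a noetherian ring the required
generators of pp-types exist. -/
theorem isShortOfLength_iff [IsNoetherianRing R] {A B : Type u} [AddCommGroup A] [Module R A]
    [Module.Finite R A] [AddCommGroup B] [Module R B] [Module.Finite R B] {f : A →ₗ[R] B}
    {N : ℕ} : IsShortOfLength R f N ↔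
      Function.Injective f ∧ ∀ a, LenLE (tp (R := R) B (f a)) (tp A a) N := by
  refine and_congr_right fun _ => forall_congr' fun a => ?_
  constructor
  · intro h
    obtain ⟨φ, hφ⟩ := PPFormula.exists_of_pointed A a (R := R)
    obtain ⟨ψ, hψ⟩ := PPFormula.exists_of_pointed B (f a) (R := R)
    have := PPFormula.intervalLengthLE_iff.1
      (h φ ψ (PPFormula.generates_iff.2 hφ) (PPFormula.generates_iff.2 hψ))
    rwa [show φ.toPP = tp A a from Subtype.ext hφ,
      show ψ.toPP = tp B (f a) from Subtype.ext hψ] at this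
  · intro h φ ψ hφ hψ
    rw [PPFormula.intervalLengthLE_iff,
      show φ.toPP = tp A a from Subtype.ext (PPFormula.generates_iff.1 hφ),
      show ψ.toPP = tp B (f a) from Subtype.ext (PPFormula.generates_iff.1 hψ)]
    exact h

end PPFunctors

/-! ### Almost split sequences -/

section AlmostSplit

variable {R : Type u} [Ring R]

/-- The endomorphism ring of an indecomposable module of finite length is local (Fitting). -/
theorem isUnit_or_isUnit_one_sub {A : Type u} [AddCommGroup A] [Module R A]
    (hfl : IsFiniteLength R A) (hind : IsIndecomposableModule R A) (e : Module.End R A) :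
    IsUnit e ∨ IsUnit (1 - e) := by
  obtain ⟨_, _⟩ := isFiniteLength_iff_isNoetherian_isArtinian.1 hfl
  obtain ⟨n, hn, hn0⟩ := (e.eventually_isCompl_ker_pow_range_pow.and
    (Filter.eventually_ne_atTop 0)).exists
  rcases hind.2 _ (Submodule.isIdempotentElem_projection hn) with h | h
  · left
    have hk : LinearMap.ker (e ^ n) = ⊥ := by
      rw [← Submodule.range_projection hn, h, LinearMap.range_zero]
    have hr : LinearMap.range (e ^ n) = ⊤ := by
      rw [← Submodule.ker_projection hn, h, LinearMap.ker_zero]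
    have : IsUnit (e ^ n) := (Module.End.isUnit_iff _).2
      ⟨LinearMap.ker_eq_bot.1 hk, LinearMap.range_eq_top.1 hr⟩
    exact (isUnit_pow_iff hn0).1 this
  · right
    have hr : LinearMap.range (e ^ n) = ⊥ := by
      rw [← Submodule.ker_projection hn, h, LinearMap.ker_id]
    exact IsNilpotent.isUnit_one_sub ⟨n, LinearMap.range_eq_bot.1 hr⟩

variable {A B C : Type u} [AddCommGroup A] [Module R A] [AddCommGroup B] [Module R B]
  [AddCommGroup C] [Module R C] {f : A →ₗ[R] B} {g : B →ₗ[R] C}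

theorem IsAlmostSplitSequence.not_retract (h : IsAlmostSplitSequence R f g) :
    ¬ ∃ r : B →ₗ[R] A, r ∘ₗ f = LinearMap.id := by
  obtain ⟨hf, hg, hfg, hs, -⟩ := h
  have hex : Function.Exact f g := LinearMap.exact_iff.2 hfg
  exact fun hr => hs (((hex.split_tfae hf hg).out 1 0).1 hr)

/-- The left map of an almost split sequence is left almost split: every homomorphism out of `A`
which is not a split monomorphism factors through it, whether or not it is injective. -/
theorem IsAlmostSplitSequence.exists_factor (h : IsAlmostSplitSequence R f g)
    (hfl : IsFiniteLength R A) {X : Type u} [AddCommGroup X] [Module R X] (q : A →ₗ[R] X)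
    (hq : ¬ ∃ r : X →ₗ[R] A, r ∘ₗ q = LinearMap.id) : ∃ t : B →ₗ[R] X, t ∘ₗ f = q := by
  have hns := h.not_retract
  obtain ⟨hf, -, -, -, hind, -, -, hfac⟩ := h
  -- The pair `(q, f)` is injective, and by locality of `End A` it does not split.
  obtain ⟨t, ht⟩ := hfac (X × B) (q.prod f)
    (fun x y hxy => hf (congrArg Prod.snd hxy)) (by
      rintro ⟨r, hr⟩
      have hsum : (r ∘ₗ LinearMap.inl R X B) ∘ₗ q + (r ∘ₗ LinearMap.inr R X B) ∘ₗ f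
          = (1 : Module.End R A) := by
        ext x
        have := LinearMap.congr_fun hr x
        simpa [← map_add] using this
      rcases isUnit_or_isUnit_one_sub hfl hind ((r ∘ₗ LinearMap.inl R X B) ∘ₗ q) with hu | hu
      · obtain ⟨w, hw⟩ := hu.exists_left_inv
        exact hq ⟨w ∘ₗ (r ∘ₗ LinearMap.inl R X B), hw⟩
      · rw [← hsum, add_sub_cancel_left] at hu
        obtain ⟨w, hw⟩ := hu.exists_left_inv
        exact hns ⟨w ∘ₗ (r ∘ₗ LinearMap.inr R X B), hw⟩)
  refine ⟨LinearMap.fst R X B ∘ₗ t, ?_⟩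
  rw [LinearMap.comp_assoc, ht, LinearMap.fst_prod]

/-- The pp-type of `f a` is either equal to that of `a` or the unique largest one properly
below it. -/
theorem IsAlmostSplitSequence.lenLE_one (h : IsAlmostSplitSequence R f g)
    (hfl : IsFiniteLength R A) [Module.Finite R A] [Module.Finite R B] (a : A) :
    LenLE (tp (R := R) B (f a)) (tp A a) 1 := by
  refine _root_.lenLE_one fun F hF => ?_
  obtain ⟨X, hX, x, rfl⟩ := exists_tp_eq F
  obtain ⟨q, rfl⟩ := tp_le_iff.1 hF
  by_cases hq : ∃ r : X.carrier →ₗ[R] A, r ∘ₗ q = LinearMap.id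
  · obtain ⟨r, hr⟩ := hq
    exact Or.inl (le_antisymm hF (tp_le_iff.2 ⟨r, LinearMap.congr_fun hr a⟩))
  · obtain ⟨t, rfl⟩ := h.exists_factor hfl q hq
    exact Or.inr (tp_map_le t (f a))

end AlmostSplit

/-! ### Chains of almost split sequences -/

/-- Exactness says `π (j + 1) ∘ i j = -(μ j ∘ π j)`; iterating, the two ways around the ladder agree
up to sign. -/
theorem pi_compChain {R : Type u} [Ring R] {L M : ℕ → ModuleBdl R} {n : ℕ}
    {i : ∀ j : ℕ, (M j).carrier →ₗ[R] (M (j + 1)).carrier}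
    {π : ∀ j : ℕ, (M j).carrier →ₗ[R] (L j).carrier}
    {μ : ∀ j : ℕ, (L j).carrier →ₗ[R] (L (j + 1)).carrier}
    (hseq : ∀ j, j < n →
      IsAlmostSplitSequence R (LinearMap.prod (i j) (π j)) ((π (j + 1)).coprod (μ j)))
    (a : (M 0).carrier) (j : ℕ) (hj : j ≤ n) :
    π j (compChain i j a) = compChain μ j (π 0 a) ∨
      π j (compChain i j a) = -compChain μ j (π 0 a) := by
  induction j with
  | zero => exact Or.inl rfl
  | succ j ih =>
    have hex := (hseq j hj).2.2.1
    have h0 : (i j).prod (π j) (compChain i j a) ∈ LinearMap.ker ((π (j + 1)).coprod (μ j)) :=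
      hex ▸ LinearMap.mem_range_self _ _
    have h1 : π (j + 1) (i j (compChain i j a)) = -μ j (π j (compChain i j a)) := by
      simpa [add_eq_zero_iff_eq_neg] using h0
    change π (j + 1) (i j (compChain i j a)) = μ j (compChain μ j (π 0 a)) ∨
      π (j + 1) (i j (compChain i j a)) = -μ j (compChain μ j (π 0 a))
    rw [h1]
    rcases ih (by omega) with h | h
    · exact Or.inr (by rw [h])
    · exact Or.inl (by rw [h, map_neg, neg_neg])

/-- Let `R` be an artin algebra, `L₁, …, L_{n+1}` and `M₁, …, M_{n+1}` indecomposable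
finite-length modules (indexed here by `0, …, n`), and for each `1 ≤ j ≤ n` (here `j < n`)
let `0 → M_j →(i_j, π_j) M_{j+1} ⊕ L_j →(π_{j+1}, μ_j) L_{j+1} → 0` be almost split exact.
If `μ_n ∘ … ∘ μ_1` is a short embedding then `i_n ∘ … ∘ i_1` is a short embedding. -/
theorem isShortEmbedding_comp_of_almostSplit_chain
    (k : Type u) [CommRing k] [IsArtinianRing k]
    (R : Type u) [Ring R] [Algebra k R] [Module.Finite k R]
    (L M : ℕ → ModuleBdl R) (n : ℕ)
    (hLfl : ∀ j, j ≤ n → IsFiniteLength R (L j).carrier)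
    (hMfl : ∀ j, j ≤ n → IsFiniteLength R (M j).carrier)
    (hLind : ∀ j, j ≤ n → IsIndecomposableModule R (L j).carrier)
    (hMind : ∀ j, j ≤ n → IsIndecomposableModule R (M j).carrier)
    (i : ∀ j : ℕ, (M j).carrier →ₗ[R] (M (j + 1)).carrier)
    (π : ∀ j : ℕ, (M j).carrier →ₗ[R] (L j).carrier)
    (μ : ∀ j : ℕ, (L j).carrier →ₗ[R] (L (j + 1)).carrier)
    (hseq : ∀ j, j < n →
      IsAlmostSplitSequence R (LinearMap.prod (i j) (π j)) ((π (j + 1)).coprod (μ j)))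
    (hshort : IsShortEmbedding R (compChain μ n)) :
    IsShortEmbedding R (compChain i n) := by
  obtain ⟨N, hN⟩ := hshort
  have : IsNoetherian k R := isNoetherian_of_isNoetherianRing_of_finite k R
  have : IsNoetherianRing R := isNoetherian_of_tower k inferInstance
  have finL : ∀ j, j ≤ n → Module.Finite R (L j).carrier := fun j hj =>
    haveI := (isFiniteLength_iff_isNoetherian_isArtinian.1 (hLfl j hj)).1
    inferInstance
  have finM : ∀ j, j ≤ n → Module.Finite R (M j).carrier := fun j hj =>
    haveI := (isFiniteLength_iff_isNoetherian_isArtinian.1 (hMfl j hj)).1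
    inferInstance
  have := finL 0 (Nat.zero_le n)
  have := finM 0 (Nat.zero_le n)
  have := finL n le_rfl
  have := finM n le_rfl
  obtain ⟨hinj, hlen⟩ := isShortOfLength_iff.1 hN
  refine ⟨n + N, isShortOfLength_iff.2 ⟨?_, fun a => ?_⟩⟩
  · rw [injective_iff_map_eq_zero]
    intro a ha
    have hμ : compChain μ n (π 0 a) = 0 := by
      rcases pi_compChain hseq a n le_rfl with h | h <;> rw [ha, map_zero] at h
      · exact h.symm
      · exact neg_eq_zero.1 h.symm
    have hπ : π 0 a = 0 := (injective_iff_map_eq_zero _).1 hinj _ hμ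
    -- Each `π j` kills the image of `a` in `M j`, and `(i j, π j)` is injective; hence `i j` kills
    -- that image only if it is already zero.
    have key : ∀ j, j ≤ n → compChain i j a = 0 → a = 0 := by
      intro j
      induction j with
      | zero => exact fun _ h => h
      | succ j ih =>
        intro hj h
        refine ih (by omega) ((injective_iff_map_eq_zero _).1 (hseq j hj).1 _ ?_)
        have hπj : π j (compChain i j a) = 0 := by
          rcases pi_compChain hseq a j (by omega) with h' | h' <;> simpa [hπ] using h'
        exact Prod.ext h hπj
    exact key n le_rfl ha
  · set c := tp (R := R) (L 0).carrier (π 0 a) with hc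
    have upper : ∀ j (hj : j ≤ n), haveI := finM j hj
        LenLE (tp (R := R) (M j).carrier (compChain i j a) ⊔ c) (tp (M 0).carrier a ⊔ c) j := by
      intro j
      induction j with
      | zero => exact fun _ => lenLE_self _
      | succ j ih =>
        intro hj
        have := finM (j + 1) hj
        have := finM j (by omega)
        have := finL j (by omega)
        have h1 := (hseq j hj).lenLE_one (hMfl j (by omega)) (compChain i j a)
        have hle := tp_map_le ((i j).prod (π j)) (compChain i j a)
        have h2 := h1.sup_right hle c
        have h3 : tp (R := R) (L j).carrier (π j (compChain i j a)) ≤ c := by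
          rcases pi_compChain hseq a j (by omega) with h | h
          · rw [h]; exact tp_map_le (compChain μ j) (π 0 a)
          · rw [h, tp_neg]; exact tp_map_le (compChain μ j) (π 0 a)
        have h4 : tp (R := R) ((M (j + 1)).carrier × (L j).carrier)
            ((i j).prod (π j) (compChain i j a)) ⊔ c =
            tp (R := R) (M (j + 1)).carrier (compChain i (j + 1) a) ⊔ c := by
          change tp (R := R) ((M (j + 1)).carrier × (L j).carrier)
            (i j (compChain i j a), π j (compChain i j a)) ⊔ c = _
          rw [← tp_sup, sup_assoc, sup_eq_right.2 h3]
          rfl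
        rw [h4] at h2
        have h5 := h2.trans (ih (by omega)) (sup_le_sup_right (tp_map_le (i j) _) c)
          (sup_le_sup_right (tp_map_le (compChain i j) a) c)
        exact fun s h h' => (h5 s h h').trans_eq (Nat.add_comm 1 j)
    have hlow : LenLE (tp (R := R) (M n).carrier (compChain i n a))
        (tp (R := R) (M n).carrier (compChain i n a) ⊔ c) N := by
      refine LenLE.sup_of_inf ((hlen (π 0 a)).mono (le_inf ?_ (tp_map_le _ _)) le_rfl)
      rcases pi_compChain hseq a n le_rfl with h | h
      · rw [← h]; exact tp_map_le _ _
      · rw [← tp_neg, ← h]; exact tp_map_le _ _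
    have := hlow.trans (upper n le_rfl) le_sup_left
      (sup_le_sup_right (tp_map_le (compChain i n) a) c)
    rw [add_comm]
    exact this.mono le_rfl le_sup_left
end

section
/- Let R be an algebra over a field k and let N be an indecomposable Σ-pure-injective right R-module whose (necessarily local) endomorphism ring S, with maximal ideal m, satisfies that the canonical embedding of k into S/m is an isomorphism. Then the local dual Hom_S(N, E(S/m)) of N is isomorphic as a left R-module to the k-dual Hom_k(N, k); in particular, Hom_k(N, k) is an indecomposable left R-module. -/
/-! Write `S = End_R(N)`, with radical `𝔪`, and `DN = Hom_k(N, k)`.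

The chain condition makes `N` algebraically compact
(`FinitelySolvable.exists_solution`), so inclusions of pp-types of elements of `N` are realised
by endomorphisms, and orbits of pairs of elements under `S` are pp-definable
(`IsSigmaPureInjective.exists_system_orbit`). Consequently, for every non-zero additive map `h`
on `N`, an element `x` of minimal pp-type with `h x ≠ 0` satisfies `h (𝔪 x) = 0`
(`IsSigmaPureInjective.exists_radical_killed`); this is a form of the statement that `N` is
semi-artinian over `S`.

*The isomorphism.* Let `ev : E → k` be a `k`-linear form extending `S/𝔪 ≅ k`. Composition with
`ev` is a map `Hom_S(N, E) → DN`, injective because `E` is an essential extension of `S/𝔪`.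
For surjectivity, `ev` induces an embedding of `E` into `Hom_k(S, k)`, which splits as `E` is
injective; since `Hom_k(S, k)` has the simple socle `S/𝔪`, which lies in `E`, the complement of
`E` has zero socle. A form `g ∈ DN` is an `S`-linear map `N → Hom_k(S, k)`, and its component in
the complement is zero by the semi-artinian property (`exists_lift_of_injective_hull`).

*Indecomposability.* Let `0 ≠ x₀ ∈ N` with `𝔪 x₀ = 0`, so that `S x₀ = k x₀`. Endomorphisms of
`DN` preserve pp-conditions, and annihilators of pp-definable sets are pp-definable
(`dual_end_preserves_orbit_annihilator`), so an idempotent `e` acts on the values at `x₀` as a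
scalar, `0` or `1`. Replacing `e` by `1 - e` if needed, let the scalar be `0`. If `e g ≠ 0`,
choose `x` with `(e g) x ≠ 0` and `(e g)(𝔪 x) = 0`, and `g'` with `g' x₀ = -(e g) x`. Then
`(e g, g')` annihilates the orbit `S (x, x₀)`, hence so does its image `(e g, e g')`; but
`(e g') x₀ = 0`, so `(e g) x = 0`, a contradiction (`dual_idempotent_eq_zero`).
-/

universe u v

open MulOpposite

section LocalDual

variable (R : Type u) [Ring R]

/-- The left `R`-module structure on `Hom_S(N, E)`, where `N` is a right `R`-module,
`S = End_R(N)` and `E` is an `S`-module: `(r • g)(x) = g(x · r)`. -/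
instance localDualModule (N : Type u) [AddCommGroup N] [Module Rᵐᵒᵖ N]
    (E : Type u) [AddCommGroup E] [Module (Module.End Rᵐᵒᵖ N) E] :
    Module R (N →ₗ[Module.End Rᵐᵒᵖ N] E) where
  smul r g :=
    { toFun := fun x => g (op r • x)
      map_add' := fun x y => by
        show g (op r • (x + y)) = g (op r • x) + g (op r • y)
        rw [smul_add, map_add]
      map_smul' := fun s x => by
        show g (op r • s x) = s • g (op r • x)
        rw [← s.map_smul]
        exact g.map_smul s (op r • x) }
  one_smul g := LinearMap.ext fun x => by show g (op (1 : R) • x) = g x; rw [op_one, one_smul]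
  mul_smul r r' g := LinearMap.ext fun x => by
    show g (op (r * r') • x) = g (op r' • op r • x)
    rw [← mul_smul, ← op_mul]
  smul_zero r := rfl
  smul_add r g h := rfl
  add_smul r r' g := LinearMap.ext fun x => by
    show g (op (r + r') • x) = g (op r • x) + g (op r' • x)
    rw [op_add, add_smul, map_add]
  zero_smul g := LinearMap.ext fun x => by
    show g (op (0 : R) • x) = 0
    rw [op_zero, zero_smul, map_zero]

/-- The left `R`-module structure on the `k`-dual `Hom_k(N, k)` of a right `R`-module:
`(r • ν)(x) = ν(x · r)`. -/
instance kDualModule (k : Type u) [Field k] (N : Type u) [AddCommGroup N] [Module Rᵐᵒᵖ N]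
    [Module k N] [SMulCommClass k Rᵐᵒᵖ N] :
    Module R (N →ₗ[k] k) where
  smul r g :=
    { toFun := fun x => g (op r • x)
      map_add' := fun x y => by
        show g (op r • (x + y)) = g (op r • x) + g (op r • y)
        rw [smul_add, map_add]
      map_smul' := fun a x => by
        show g (op r • a • x) = a • g (op r • x)
        rw [← smul_comm a (op r) x, map_smul] }
  one_smul g := LinearMap.ext fun x => by
    show g (op (1 : R) • x) = g x
    rw [op_one, one_smul]
  mul_smul r r' g := LinearMap.ext fun x => by
    show g (op (r * r') • x) = g (op r' • op r • x)
    rw [← mul_smul, ← op_mul]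
  smul_zero r := rfl
  smul_add r g h := rfl
  add_smul r r' g := LinearMap.ext fun x => by
    show g (op (r + r') • x) = g (op r • x) + g (op r' • x)
    rw [op_add, add_smul, map_add]
  zero_smul g := LinearMap.ext fun x => by
    show g (op (0 : R) • x) = 0
    rw [op_zero, zero_smul, map_zero]

end LocalDual

/-! ### pp-definable subgroups and algebraic compactness -/

section AlgebraicCompactness

open Finsupp

variable {A : Type u} [Ring A] {M : Type u} [AddCommGroup M] [Module A M]

/-- A finite homogeneous linear system indexed by arbitrary finite types defines a pp-formula. -/
theorem exists_ppFormula_of_finite {ι κ : Type*} [Fintype ι] [Finite κ]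
    (c : κ → A) (H : ι → κ → A) :
    ∃ φ : PPFormula A 1, ∀ m : M, m ∈ φ.sub M ↔
      ∃ y : ι → M, ∀ j, c j • m + ∑ l, H l j • y l = 0 := by
  classical
  have := Fintype.ofFinite κ
  let eι := Fintype.equivFin ι
  let eκ := Fintype.equivFin κ
  refine ⟨⟨Fintype.card ι, Fintype.card κ, fun i j =>
    Sum.elim (fun _ => c (eκ.symm j)) (fun l => H (eι.symm l) (eκ.symm j)) i⟩, fun m => ?_⟩
  constructor
  · rintro ⟨y, hy⟩
    refine ⟨fun l => y (eι l), fun j => ?_⟩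
    have h := hy (eκ j)
    simp only [Sum.elim_inl, Sum.elim_inr, Equiv.symm_apply_apply, Finset.univ_unique,
      Finset.sum_singleton] at h
    rw [← h]
    congr 1
    exact Fintype.sum_equiv eι _ _ (fun l => by simp)
  · rintro ⟨y, hy⟩
    refine ⟨fun l => y (eι.symm l), fun j => ?_⟩
    have h := hy (eκ.symm j)
    simp only [Sum.elim_inl, Sum.elim_inr, Finset.univ_unique, Finset.sum_singleton]
    rw [← h]
    congr 1
    exact Fintype.sum_equiv eι.symm _ _ (fun l => rfl)

/-- pp-definable subgroups are closed under intersection. -/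
theorem exists_ppFormula_inf (φ ψ : PPFormula A 1) :
    ∃ χ : PPFormula A 1, ∀ m : M, m ∈ χ.sub M ↔ m ∈ φ.sub M ∧ m ∈ ψ.sub M := by
  obtain ⟨χ, hχ⟩ := exists_ppFormula_of_finite (M := M)
    (ι := Fin φ.nex ⊕ Fin ψ.nex) (κ := Fin φ.neq ⊕ Fin ψ.neq)
    (Sum.elim (φ.H (Sum.inl 0)) (ψ.H (Sum.inl 0)))
    (Sum.elim (fun l => Sum.elim (φ.H (Sum.inr l)) 0) (fun l => Sum.elim 0 (ψ.H (Sum.inr l))))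
  refine ⟨χ, fun m => ?_⟩
  rw [hχ]
  constructor
  · rintro ⟨y, hy⟩
    refine ⟨⟨fun l => y (Sum.inl l), fun j => ?_⟩, ⟨fun l => y (Sum.inr l), fun j => ?_⟩⟩
    · simpa using hy (Sum.inl j)
    · simpa using hy (Sum.inr j)
  · rintro ⟨⟨y, hy⟩, ⟨z, hz⟩⟩
    refine ⟨Sum.elim y z, ?_⟩
    rintro (j | j)
    · simpa using hy j
    · simpa using hz j

theorem linearCombination_eq_sum_of_subset {I : Type*} (y : I → M) (t : I →₀ A)
    (J : Finset I) (h : t.support ⊆ J) :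
    linearCombination A y t = ∑ i : J, t i • y i := by
  rw [linearCombination_apply, Finsupp.sum_of_support_subset t h _ (by simp),
    ← Finset.sum_coe_sort]

/-- The values at `z` of the solutions of a finite homogeneous system form a pp-definable
subgroup. An assignment `y : I → M` is identified with the linear map
`linearCombination A y` on the free module `I →₀ A`. -/
theorem exists_ppFormula_eval {I : Type*} (T : Finset (I →₀ A)) (z : I →₀ A) :
    ∃ φ : PPFormula A 1, ∀ m : M, m ∈ φ.sub M ↔
      ∃ y : I → M, (∀ t ∈ T, linearCombination A y t = 0) ∧ linearCombination A y z = m := by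
  classical
  let J : Finset I := T.biUnion (fun t => t.support) ∪ z.support
  have hT : ∀ t ∈ T, t.support ⊆ J := fun t ht =>
    (Finset.subset_biUnion_of_mem (fun t : I →₀ A => t.support) ht).trans
      Finset.subset_union_left
  have hz : z.support ⊆ J := Finset.subset_union_right
  obtain ⟨φ, hφ⟩ := exists_ppFormula_of_finite (M := M) (ι := J) (κ := Option T)
    (fun j => j.elim (-1) (fun _ => 0)) (fun l j => j.elim (z l) (fun t => t.1 l))
  refine ⟨φ, fun m => ?_⟩
  rw [hφ]
  constructor
  · rintro ⟨y, hy⟩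
    refine ⟨fun i => if h : i ∈ J then y ⟨i, h⟩ else 0, fun t ht => ?_, ?_⟩
    · rw [linearCombination_eq_sum_of_subset _ _ J (hT t ht)]
      simpa using hy (some ⟨t, ht⟩)
    · rw [linearCombination_eq_sum_of_subset _ _ J hz]
      have := hy none
      simp only [Option.elim_none, neg_smul, one_smul, neg_add_eq_zero] at this
      simpa using this.symm
  · rintro ⟨y, hy, hm⟩
    refine ⟨fun i => y i, ?_⟩
    rintro (_ | ⟨t, ht⟩)
    · rw [linearCombination_eq_sum_of_subset _ _ J hz] at hm
      have hm' : ∑ l : J, z l • y l = m := hm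
      show (-1 : A) • m + ∑ l : J, z l • y l = 0
      rw [hm', neg_one_smul, neg_add_cancel]
    · have := hy t ht
      rw [linearCombination_eq_sum_of_subset _ _ J (hT t ht)] at this
      simpa using this

/-- The descending chain condition as a minimum principle. -/
theorem IsSigmaPureInjective.exists_minimal (hM : IsSigmaPureInjective A M)
    (C : Set (PPFormula A 1)) (hC : C.Nonempty) :
    ∃ φ ∈ C, ∀ ψ ∈ C, ψ.sub M ≤ φ.sub M → φ.sub M ≤ ψ.sub M := by
  by_contra! hcon
  choose! f hfC hfle hfnot using hcon
  obtain ⟨φ₀, hφ₀⟩ := hC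
  let c : ℕ → PPFormula A 1 := fun n => f^[n] φ₀
  have hc : ∀ n, c n ∈ C := by
    intro n
    induction n with
    | zero => exact hφ₀
    | succ n ih =>
      show f^[n + 1] φ₀ ∈ C
      rw [Function.iterate_succ_apply']
      exact hfC _ ih
  have hs : ∀ n, c (n + 1) = f (c n) := fun n => Function.iterate_succ_apply' f n φ₀
  obtain ⟨n, hn⟩ := hM c (fun i => by rw [hs]; exact hfle _ (hc i))
  refine hfnot _ (hc n) ?_
  rw [← hs, hn (n + 1) (Nat.le_succ n)]

/-- Among the finite subsystems `T` of a homogeneous system `K`, to which the fixed finite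
system `E₀` is added, one already determines the smallest possible group of values at `z`. -/
theorem IsSigmaPureInjective.exists_minimal_system (hM : IsSigmaPureInjective A M)
    {I P : Type*} (p : P → I →₀ A) (K : Set P) (E₀ : Finset (I →₀ A)) (z : I →₀ A) :
    ∃ T : Finset P, (∀ t ∈ T, t ∈ K) ∧ ∀ T' : Finset P, (∀ t ∈ T', t ∈ K) →
      ∀ y : I → M, (∀ t ∈ T, linearCombination A y (p t) = 0) →
        (∀ t ∈ E₀, linearCombination A y t = 0) →
        ∃ y' : I → M, (∀ t ∈ T', linearCombination A y' (p t) = 0) ∧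
          (∀ t ∈ E₀, linearCombination A y' t = 0) ∧
          linearCombination A y' z = linearCombination A y z := by
  classical
  let Q (T : Finset P) (φ : PPFormula A 1) : Prop := ∀ m : M, m ∈ φ.sub M ↔
    ∃ y : I → M, ((∀ t ∈ T, linearCombination A y (p t) = 0) ∧
      ∀ t ∈ E₀, linearCombination A y t = 0) ∧ linearCombination A y z = m
  have hQ : ∀ T : Finset P, ∃ φ, Q T φ := fun T => by
    obtain ⟨φ, hφ⟩ := exists_ppFormula_eval (M := M) (T.image p ∪ E₀) z
    refine ⟨φ, fun m => (hφ m).trans ?_⟩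
    simp only [Finset.mem_union, Finset.mem_image, or_imp, forall_and, forall_exists_index,
      and_imp, forall_apply_eq_imp_iff₂]
  obtain ⟨φ, ⟨T, hTK, hTφ⟩, hmin⟩ := hM.exists_minimal
    {φ | ∃ T : Finset P, (∀ t ∈ T, t ∈ K) ∧ Q T φ}
    (by obtain ⟨φ, hφ⟩ := hQ ∅
        exact ⟨φ, ∅, by simp, hφ⟩)
  refine ⟨T, hTK, fun T' hT' y hy hyE => ?_⟩
  obtain ⟨ψ, hψ⟩ := hQ (T ∪ T')
  have hle : ψ.sub M ≤ φ.sub M := fun m hm => by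
    obtain ⟨y, ⟨h1, h2⟩, h3⟩ := (hψ m).1 hm
    exact (hTφ m).2 ⟨y, ⟨fun t ht => h1 t (Finset.mem_union_left _ ht), h2⟩, h3⟩
  have hge := hmin ψ ⟨T ∪ T', fun t ht => (Finset.mem_union.1 ht).elim (hTK t) (hT' t), hψ⟩ hle
  obtain ⟨y', ⟨h1, h2⟩, h3⟩ := (hψ _).1 (hge ((hTφ _).2 ⟨y, ⟨hy, hyE⟩, rfl⟩))
  exact ⟨y', fun t ht => h1 t (Finset.mem_union_right _ ht), h2, h3⟩

theorem linearCombination_add_fun {I : Type*} (y y' : I → M) (t : I →₀ A) :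
    linearCombination A (y + y') t = linearCombination A y t + linearCombination A y' t := by
  simp [linearCombination_apply, Finsupp.sum, Finset.sum_add_distrib]

theorem linearCombination_sub_fun {I : Type*} (y y' : I → M) (t : I →₀ A) :
    linearCombination A (y - y') t = linearCombination A y t - linearCombination A y' t := by
  simp [linearCombination_apply, Finsupp.sum, smul_sub, Finset.sum_sub_distrib]

/-- The (inhomogeneous) linear system `B`, whose members `(t, m)` stand for the equations
`t(y) = m`, has a solution in `M` for each of its finite subsystems. -/
def FinitelySolvable {I : Type*} (B : Set ((I →₀ A) × M)) : Prop :=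
  ∀ T : Finset ((I →₀ A) × M), (∀ t ∈ T, t ∈ B) →
    ∃ y : I → M, ∀ t ∈ T, linearCombination A y t.1 = t.2

theorem FinitelySolvable.exists_insert (hM : IsSigmaPureInjective A M)
    {I : Type*} {B : Set ((I →₀ A) × M)} (hB : FinitelySolvable B) (z : I →₀ A) :
    ∃ w : M, FinitelySolvable (insert (z, w) B) := by
  classical
  obtain ⟨T, hTB, hT⟩ := hM.exists_minimal_system Prod.fst B ∅ z
  obtain ⟨y₀, hy₀⟩ := hB T hTB
  refine ⟨linearCombination A y₀ z, fun T'' hT'' => ?_⟩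
  let T' := T''.erase (z, linearCombination A y₀ z)
  have hT'B : ∀ t ∈ T', t ∈ B := fun t ht =>
    ((hT'' t (Finset.mem_of_mem_erase ht)).resolve_left (Finset.ne_of_mem_erase ht))
  obtain ⟨y₁, hy₁⟩ := hB (T ∪ T')
    (fun t ht => (Finset.mem_union.1 ht).elim (hTB t) (hT'B t))
  -- The solution `y₁` is corrected by a solution of the homogeneous system, so that its value
  -- at `z` becomes the one prescribed by `y₀`.
  obtain ⟨y₂, hy₂, -, hz⟩ := hT T' hT'B (y₀ - y₁)
    (fun t ht => by
      rw [linearCombination_sub_fun, hy₀ t ht, hy₁ t (Finset.mem_union_left _ ht), sub_self])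
    (by simp)
  refine ⟨y₁ + y₂, fun t ht => ?_⟩
  rw [linearCombination_add_fun]
  by_cases h : t = (z, linearCombination A y₀ z)
  · rw [h]
    simp only
    rw [hz, linearCombination_sub_fun, add_sub_cancel]
  · have ht' : t ∈ T' := Finset.mem_erase.2 ⟨h, ht⟩
    rw [hy₁ t (Finset.mem_union_right _ ht'), hy₂ t ht', add_zero]

/-- Σ-pure-injective modules are algebraically compact. -/
theorem FinitelySolvable.exists_solution (hM : IsSigmaPureInjective A M)
    {I : Type*} {B : Set ((I →₀ A) × M)} (hB : FinitelySolvable B) :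
    ∃ y : I → M, ∀ t ∈ B, linearCombination A y t.1 = t.2 := by
  classical
  obtain ⟨B', hBB', hmax⟩ := zorn_subset_nonempty
    {B : Set ((I →₀ A) × M) | FinitelySolvable B} (fun c hc hchain hne => by
      refine ⟨⋃₀ c, fun T hT => ?_, fun s hs => Set.subset_sUnion_of_mem hs⟩
      obtain ⟨s, hs, hTs⟩ := DirectedOn.exists_mem_subset_of_finset_subset_biUnion
        (s := T) (f := id) hne hchain.directedOn (by
          intro t ht
          simpa using hT t ht)
      exact hc hs T (fun t ht => hTs ht)) B hB
  have hex : ∀ i : I, ∃ w : M, (single i (1 : A), w) ∈ B' := fun i => by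
    obtain ⟨w, hw⟩ := hmax.1.exists_insert hM (single i (1 : A))
    exact ⟨w, hmax.2 hw (Set.subset_insert _ _) (Set.mem_insert _ _)⟩
  choose y hy using hex
  refine ⟨y, fun t ht => ?_⟩
  obtain ⟨y', hy'⟩ := hmax.1
    (insert t (t.1.support.image (fun i => (single i (1 : A), y i)))) (by
      intro s hs
      rcases Finset.mem_insert.1 hs with rfl | hs
      · exact hBB' ht
      · obtain ⟨i, -, rfl⟩ := Finset.mem_image.1 hs
        exact hy i)
  rw [← hy' t (Finset.mem_insert_self _ _)]
  simp only [linearCombination_apply, Finsupp.sum]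
  refine Finset.sum_congr rfl fun i hi => ?_
  have := hy' _ (Finset.mem_insert_of_mem (Finset.mem_image_of_mem _ hi))
  simp only [linearCombination_single, one_smul] at this
  rw [this]

/-- The orbit `{(s x, s x₀)}` of a pair under the endomorphism ring is pp-definable: it is cut
out by a finite set `T` of the linear relations which hold between the elements of `M`. -/
theorem IsSigmaPureInjective.exists_system_orbit (hM : IsSigmaPureInjective A M) (x x₀ : M) :
    ∃ T : Finset (M →₀ A), (∀ t ∈ T, linearCombination A (id : M → M) t = 0) ∧
      ∀ y : M → M, (∀ t ∈ T, linearCombination A y t = 0) →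
        ∃ s : Module.End A M, s x = y x ∧ s x₀ = y x₀ := by
  classical
  let K : Set (M →₀ A) := {t | linearCombination A (id : M → M) t = 0}
  obtain ⟨T₁, hT₁K, hT₁⟩ := hM.exists_minimal_system id K ∅ (single x 1)
  obtain ⟨T₂, hT₂K, hT₂⟩ := hM.exists_minimal_system id K {single x 1} (single x₀ 1)
  simp only [id, Finset.mem_singleton, forall_eq, linearCombination_single, one_smul,
    Finset.notMem_empty, IsEmpty.forall_iff, implies_true, true_and, forall_const] at hT₁ hT₂
  refine ⟨T₁ ∪ T₂, fun t ht => (Finset.mem_union.1 ht).elim (hT₁K t) (hT₂K t),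
    fun y hy => ?_⟩
  let B : Set ((M →₀ A) × M) :=
    {q | (q.1 ∈ K ∧ q.2 = 0) ∨ q = (single x 1, y x) ∨ q = (single x₀ 1, y x₀)}
  have hB : FinitelySolvable B := by
    intro T hT
    let T' : Finset (M →₀ A) := (T.filter (fun q => q.1 ∈ K ∧ q.2 = 0)).image Prod.fst
    have hT'K : ∀ t ∈ T', t ∈ K := by
      intro t ht
      obtain ⟨q, hq, rfl⟩ := Finset.mem_image.1 ht
      exact (Finset.mem_filter.1 hq).2.1
    obtain ⟨y₁, hy₁, hx₁⟩ := hT₁ (T₂ ∪ T')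
      (fun t ht => (Finset.mem_union.1 ht).elim (hT₂K t) (hT'K t)) y
      (fun t ht => hy t (Finset.mem_union_left _ ht))
    obtain ⟨y₂, hy₂, hx₂, hx₀⟩ := hT₂ T' hT'K (y - y₁)
      (fun t ht => by
        rw [linearCombination_sub_fun, hy t (Finset.mem_union_right _ ht),
          hy₁ t (Finset.mem_union_left _ ht), sub_self])
      (by simp [hx₁])
    refine ⟨y₁ + y₂, fun q hq => ?_⟩
    rw [linearCombination_add_fun]
    rcases hT q hq with h | rfl | rfl
    · have hq' : q.1 ∈ T' := Finset.mem_image_of_mem _ (Finset.mem_filter.2 ⟨hq, h⟩)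
      rw [hy₁ _ (Finset.mem_union_right _ hq'), hy₂ _ hq', h.2, add_zero]
    · simp [hx₁, hx₂]
    · simp [hx₀]
  obtain ⟨v, hv⟩ := hB.exists_solution hM
  have hvK : ∀ t ∈ K, linearCombination A v t = 0 := fun t ht => hv (t, 0) (Or.inl ⟨ht, rfl⟩)
  -- Since `v` satisfies every linear relation of `M`, it is linear.
  refine ⟨{ toFun := v, map_add' := fun a b => ?_, map_smul' := fun a b => ?_ }, ?_, ?_⟩
  · have := hvK (single (a + b) 1 - single a 1 - single b 1) (by simp [K])
    simp only [map_sub, linearCombination_single, one_smul] at this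
    rw [sub_sub, sub_eq_zero] at this
    exact this
  · have := hvK (single (a • b) 1 - single b a) (by simp [K])
    simp only [map_sub, linearCombination_single, one_smul] at this
    exact sub_eq_zero.1 this
  · simpa using hv (single x 1, y x) (Or.inr (Or.inl rfl))
  · simpa using hv (single x₀ 1, y x₀) (Or.inr (Or.inr rfl))

/-- An inclusion of pp-types is realised by an endomorphism. -/
theorem IsSigmaPureInjective.exists_end_apply_eq (hM : IsSigmaPureInjective A M) {x x' : M}
    (h : ∀ φ : PPFormula A 1, x ∈ φ.sub M → x' ∈ φ.sub M) :
    ∃ s : Module.End A M, s x = x' := by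
  obtain ⟨T, hTid, hT⟩ := hM.exists_system_orbit x x
  obtain ⟨φ, hφ⟩ := exists_ppFormula_eval (M := M) T (single x 1)
  obtain ⟨y, hy, hyx⟩ := (hφ x').1 (h φ ((hφ x).2 ⟨id, hTid, by simp⟩))
  obtain ⟨s, hs, -⟩ := hT y hy
  exact ⟨s, by simpa [hs] using hyx⟩

theorem PPFormula.end_apply_mem (φ : PPFormula A 1) (s : Module.End A M) {x : M}
    (hx : x ∈ φ.sub M) : s x ∈ φ.sub M := by
  obtain ⟨y, hy⟩ := hx
  refine ⟨fun l => s (y l), fun j => ?_⟩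
  have := congrArg s (hy j)
  simpa using this

/-- If `x` has minimal pp-type among the elements not killed by `h`, then the Jacobson radical
of the endomorphism ring moves `x` into the kernel of `h`. For surjective `h` which is linear
over the endomorphism ring, this says that every non-zero quotient of `M` over its endomorphism
ring has a non-zero element annihilated by the radical. -/
theorem IsSigmaPureInjective.exists_radical_killed (hM : IsSigmaPureInjective A M)
    {B : Type*} [AddCommGroup B] (h : M →+ B) (hne : ∃ x, h x ≠ 0) :
    ∃ x, h x ≠ 0 ∧ ∀ s ∈ Ideal.jacobson (⊥ : Ideal (Module.End A M)), h (s x) = 0 := by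
  obtain ⟨φ, ⟨x, hxφ, hx⟩, hmin⟩ := hM.exists_minimal
    {φ | ∃ x ∈ φ.sub M, h x ≠ 0} (by
      obtain ⟨x, hx⟩ := hne
      obtain ⟨φ, hφ⟩ := exists_ppFormula_of_finite (M := M) (ι := Empty) (κ := Empty)
        (A := A) (fun _ => 0) (fun _ _ => 0)
      exact ⟨φ, x, (hφ x).2 ⟨0, fun j => j.elim⟩, hx⟩)
  refine ⟨x, hx, fun s hs => ?_⟩
  by_contra hsx
  obtain ⟨t, ht⟩ := hM.exists_end_apply_eq (x := s x) (x' := x) (fun ψ hψ => by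
    obtain ⟨χ, hχ⟩ := exists_ppFormula_inf (M := M) φ ψ
    have := hmin χ ⟨s x, (hχ _).2 ⟨φ.end_apply_mem s hxφ, hψ⟩, hsx⟩
      (fun m hm => ((hχ m).1 hm).1)
    exact ((hχ x).1 (this hxφ)).2)
  -- Now `(1 - t s) x = 0` although `1 - t s` is left invertible.
  obtain ⟨z, hz⟩ := Ideal.mem_jacobson_iff.1 hs (-t)
  rw [Ideal.mem_bot, sub_eq_zero] at hz
  have := LinearMap.congr_fun hz x
  simp [ht] at this
  exact hx (by rw [← this, map_zero])

end AlgebraicCompactness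

/-! ### Endomorphisms of the `k`-dual -/

section Dual

variable {k : Type u} [Field k] {R : Type u} [Ring R]
  {N : Type u} [AddCommGroup N] [Module Rᵐᵒᵖ N] [Module k N] [SMulCommClass k Rᵐᵒᵖ N]

/-- The annihilator in `Hom_k(N, k)²` of the orbit of a pair `(x, x₀)` is pp-definable, hence
preserved by every endomorphism `u` of the `k`-dual. -/
theorem dual_end_preserves_orbit_annihilator (hN : IsSigmaPureInjective Rᵐᵒᵖ N)
    (u : (N →ₗ[k] k) →ₗ[R] (N →ₗ[k] k)) (g g' : N →ₗ[k] k) (x x₀ : N)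
    (h : ∀ s : Module.End Rᵐᵒᵖ N, g (s x) + g' (s x₀) = 0) :
    u g x + u g' x₀ = 0 := by
  classical
  obtain ⟨T, hTid, hT⟩ := hN.exists_system_orbit x x₀
  let Φ : (N → N) →ₗ[k] (T → N) :=
    { toFun := fun y t => Finsupp.linearCombination Rᵐᵒᵖ y t.1
      map_add' := fun y y' => funext fun t => linearCombination_add_fun y y' t.1
      map_smul' := fun c y => funext fun t => by
        simp [Finsupp.linearCombination_apply, Finsupp.sum, Finset.smul_sum, smul_comm c] }
  let ℓ : Module.Dual k (N → N) := g ∘ₗ LinearMap.proj x + g' ∘ₗ LinearMap.proj x₀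
  have hℓ : ℓ ∈ LinearMap.range Φ.dualMap := by
    rw [LinearMap.range_dualMap_eq_dualAnnihilator_ker, Submodule.mem_dualAnnihilator]
    intro y hy
    obtain ⟨s, hs, hs₀⟩ := hT y (fun t ht => congrFun (LinearMap.mem_ker.1 hy) ⟨t, ht⟩)
    have := h s
    rw [hs, hs₀] at this
    exact this
  obtain ⟨η, hη⟩ := hℓ
  let ηt : T → (N →ₗ[k] k) := fun t => η ∘ₗ LinearMap.single k (fun _ : T => N) t
  -- The coefficient of the `i`-th unknown in the factorisation of `ℓ` through `Φ`.
  have key : ∀ i : N, (if i = x then g else 0) + (if i = x₀ then g' else 0) =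
      ∑ t : T, unop (t.1 i) • ηt t := by
    intro i
    ext n
    have h1 := LinearMap.congr_fun hη (Pi.single i n)
    have h2 : Φ (Pi.single i n) = ∑ t : T, Pi.single t (t.1 i • n) := by
      rw [Finset.univ_sum_single]
      funext t
      show Finsupp.linearCombination Rᵐᵒᵖ (Pi.single i n) t.1 = _
      rw [Finsupp.linearCombination_apply, Finsupp.sum, Finset.sum_eq_single i]
      · simp
      · intro b _ hb
        simp [hb]
      · intro hi
        simp [Finsupp.notMem_support_iff.1 hi]
    rw [LinearMap.dualMap_apply, h2, map_sum] at h1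
    rw [LinearMap.sum_apply]
    refine Eq.trans ?_ h1.symm
    simp only [ℓ, LinearMap.add_apply, LinearMap.comp_apply, LinearMap.proj_apply]
    congr 1
    · by_cases hi : i = x
      · subst hi; simp
      · simp [hi]
    · by_cases hi : i = x₀
      · subst hi; simp
      · simp [hi]
  have key' : ∀ i : N, (if i = x then u g x else 0) + (if i = x₀ then u g' x₀ else 0) =
      ∑ t : T, u (ηt t) (t.1 i • i) := by
    intro i
    have h1 := LinearMap.congr_fun (congrArg u (key i)) i
    rw [map_sum, LinearMap.sum_apply] at h1
    simp only [map_smul] at h1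
    refine Eq.trans ?_ h1
    rw [map_add, LinearMap.add_apply]
    congr 1
    · by_cases hi : i = x
      · subst hi; simp
      · simp [hi]
    · by_cases hi : i = x₀
      · subst hi; simp
      · simp [hi]
  let J : Finset N := T.biUnion (fun t => t.support) ∪ {x, x₀}
  have hsum := Finset.sum_congr (rfl : J = J) (fun i _ => key' i)
  rw [Finset.sum_add_distrib, Finset.sum_ite_eq', Finset.sum_ite_eq', Finset.sum_comm,
    if_pos (by simp [J]), if_pos (by simp [J])] at hsum
  rw [hsum]
  refine Finset.sum_eq_zero fun t _ => ?_
  rw [← map_sum]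
  have := hTid t.1 t.2
  rw [linearCombination_eq_sum_of_subset _ _ J
    ((Finset.subset_biUnion_of_mem (fun t : N →₀ Rᵐᵒᵖ => t.support) t.2).trans
      Finset.subset_union_left), Finset.sum_coe_sort J (fun i => t.1 i • id i)] at this
  simp only [id] at this
  rw [this, map_zero]

theorem algebraMap_smul_dual [Algebra k R] [IsScalarTower k Rᵐᵒᵖ N] (a : k) (g : N →ₗ[k] k) :
    algebraMap k R a • g = a • g := by
  ext n
  show g (op (algebraMap k R a) • n) = a • g n
  rw [← map_smul]
  congr 1
  exact algebraMap_smul Rᵐᵒᵖ a n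

theorem exists_dual_apply_eq {V : Type*} [AddCommGroup V] [Module k V] {v : V} (hv : v ≠ 0)
    (c : k) : ∃ f : V →ₗ[k] k, f v = c := by
  obtain ⟨f, hf⟩ := not_forall.1 (mt (Module.forall_dual_apply_eq_zero_iff k v).1 hv)
  exact ⟨(c * (f v)⁻¹) • f, by simp [hf]⟩

/-- The endomorphism ring of `N` is spanned by the scalars and its radical. -/
def ResidueSurjective (k R N : Type u) [Field k] [Ring R] [AddCommGroup N] [Module Rᵐᵒᵖ N]
    [Module k N] [SMulCommClass k Rᵐᵒᵖ N] : Prop :=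
  ∀ s : Module.End Rᵐᵒᵖ N, ∃ a : k, ∃ r ∈ Ideal.jacobson (⊥ : Ideal (Module.End Rᵐᵒᵖ N)),
    s = Module.toModuleEnd Rᵐᵒᵖ N a + r

/-- An idempotent endomorphism of the dual whose values all vanish at a non-zero element `x₀`
annihilated by the radical is zero. -/
theorem dual_idempotent_eq_zero (hN : IsSigmaPureInjective Rᵐᵒᵖ N)
    (hres : ResidueSurjective k R N) {x₀ : N} (hx₀ : x₀ ≠ 0)
    (hrad : ∀ s ∈ Ideal.jacobson (⊥ : Ideal (Module.End Rᵐᵒᵖ N)), s x₀ = 0)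
    (e : (N →ₗ[k] k) →ₗ[R] (N →ₗ[k] k)) (he : ∀ g, e (e g) = e g)
    (he₀ : ∀ g, e g x₀ = 0) : e = 0 := by
  ext1 g
  by_contra hg
  obtain ⟨x, hx, hxrad⟩ := hN.exists_radical_killed (e g).toAddMonoidHom (by
    by_contra! hcon
    exact hg (LinearMap.ext hcon))
  obtain ⟨g', hg'⟩ := exists_dual_apply_eq hx₀ (-(e g x))
  have := dual_end_preserves_orbit_annihilator hN e (e g) g' x x₀ (fun s => by
    obtain ⟨a, s', hs', rfl⟩ := hres s
    have h1 : e g (s' x) = 0 := hxrad s' hs'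
    simp [h1, hrad s' hs', hg'])
  rw [he, he₀, add_zero] at this
  exact hx this

theorem dual_isIndecomposable [Algebra k R] [IsScalarTower k Rᵐᵒᵖ N]
    (hN : IsSigmaPureInjective Rᵐᵒᵖ N) (hne : ∃ x : N, x ≠ 0)
    (hres : ResidueSurjective k R N) : IsIndecomposableModule R (N →ₗ[k] k) := by
  obtain ⟨x₀, hx₀, hrad⟩ := hN.exists_radical_killed (AddMonoidHom.id N) hne
  simp only [AddMonoidHom.id_apply] at hx₀ hrad
  obtain ⟨g₀, hg₀⟩ := exists_dual_apply_eq hx₀ (1 : k)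
  refine ⟨⟨g₀, fun h => by simp [h] at hg₀⟩, fun e he => ?_⟩
  have hee : ∀ g, e (e g) = e g := fun g => LinearMap.congr_fun he g
  have hsmul : ∀ (a : k) g, e (a • g) = a • e g := fun a g => by
    rw [← algebraMap_smul_dual (R := R), map_smul, algebraMap_smul_dual]
  -- On the one-dimensional space of values at `x₀`, `e` acts as the scalar `(e g₀)(x₀)`.
  have hscal : ∀ g, e g x₀ = g x₀ * e g₀ x₀ := fun g => by
    have := dual_end_preserves_orbit_annihilator hN e (g - g x₀ • g₀) 0 x₀ x₀ (fun s => by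
      obtain ⟨a, s', hs', rfl⟩ := hres s
      simp [hrad s' hs', hg₀])
    rw [map_sub, hsmul, map_zero] at this
    simpa [sub_eq_zero] using this
  have hidem : e g₀ x₀ * e g₀ x₀ = e g₀ x₀ := by rw [← hscal, hee]
  rcases (IsIdempotentElem.iff_eq_zero_or_one (p := e g₀ x₀)).1 hidem with h | h
  · left
    exact dual_idempotent_eq_zero hN hres hx₀ hrad e hee (fun g => by rw [hscal, h, mul_zero])
  · right
    have := dual_idempotent_eq_zero hN hres hx₀ hrad (LinearMap.id - e)
      (fun g => by simp [hee]) (fun g => by simp [hscal g, h])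
    exact (sub_eq_zero.1 this).symm

end Dual

/-! ### Comparison of the local dual with the `k`-dual -/

section Comparison

variable {k : Type u} [Field k] {S : Type u} [Ring S] [Algebra k S]

/-- The coinduced left `S`-module `Hom_k(S, k)`, with `(s • f)(t) = f(t s)`. It is a type
synonym, so as to carry only this action of `S`. -/
def Coinduced (k S : Type u) [Field k] [Ring S] [Algebra k S] : Type u := S →ₗ[k] k

instance : AddCommGroup (Coinduced k S) := inferInstanceAs (AddCommGroup (S →ₗ[k] k))

/-- An element of the coinduced module, as a linear form on `S`. -/
def Coinduced.form (f : Coinduced k S) : S →ₗ[k] k := f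

theorem Coinduced.ext' {f g : Coinduced k S} (h : ∀ t, f.form t = g.form t) : f = g :=
  LinearMap.ext h

instance : Module S (Coinduced k S) where
  smul s f := f.form ∘ₗ LinearMap.mulRight k s
  one_smul f := Coinduced.ext' fun t => congrArg f.form (mul_one t)
  mul_smul s s' f := Coinduced.ext' fun t => congrArg f.form (mul_assoc t s s').symm
  smul_zero _ := rfl
  smul_add _ _ _ := rfl
  add_smul s s' f := Coinduced.ext' fun t =>
    (congrArg f.form (mul_add t s s')).trans (map_add f.form _ _)
  zero_smul f := Coinduced.ext' fun t =>
    (congrArg f.form (mul_zero t)).trans (map_zero f.form)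

theorem Coinduced.smul_form (s : S) (f : Coinduced k S) (t : S) :
    (s • f).form t = f.form (t * s) := rfl

/-- The `S`-linear map `X → Hom_k(S, k)` adjoint to a `k`-linear form on an `S`-module `X`. -/
def toCoinduced {X : Type u} [AddCommGroup X] [Module S X] [Module k X] [IsScalarTower k S X]
    (g : X →ₗ[k] k) : X →ₗ[S] Coinduced k S where
  toFun x := g ∘ₗ ((LinearMap.toSpanSingleton S X x).restrictScalars k)
  map_add' x y := Coinduced.ext' fun t => (congrArg g (smul_add t x y)).trans (map_add g _ _)
  map_smul' s x := Coinduced.ext' fun t => by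
    show g (t • s • x) = g ((t * s) • x)
    rw [mul_smul]

theorem toCoinduced_form {X : Type u} [AddCommGroup X] [Module S X] [Module k X]
    [IsScalarTower k S X] (g : X →ₗ[k] k) (x : X) (t : S) :
    (toCoinduced (S := S) g x).form t = g (t • x) := rfl

/-- Every `k`-linear form on `X` factors through an `S`-linear map to the injective hull `E` of
`S / J ≅ k`. The element `e₀` is the image of `1` in `E`, and `hX` says that every non-zero
additive map out of `X` detects an element which `J` moves into its kernel. The form corresponds
to an `S`-linear map from `X` to `Hom_k(S, k)`, of which `E` is a direct summand containing the
whole socle. The component of this map in the complement vanishes, by `hX`. -/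
theorem exists_lift_of_injective_hull {X E : Type u} [AddCommGroup X] [Module S X] [Module k X]
    [IsScalarTower k S X] [AddCommGroup E] [Module S E] [Module k E] [IsScalarTower k S E]
    (hE : Module.Injective S E) (J : Ideal S)
    (hres : ∀ s : S, ∃ a : k, ∃ s' ∈ J, s = algebraMap k S a + s')
    (e₀ : E) (he₀ : ∀ s ∈ J, s • e₀ = 0) (hdense : ∀ e : E, e ≠ 0 → ∃ s : S, s • e = e₀)
    (ev : E →ₗ[k] k) (hev : ev e₀ = 1)
    (hX : ∀ h : X →+ Coinduced k S, (∃ x, h x ≠ 0) →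
      ∃ x, h x ≠ 0 ∧ ∀ s ∈ J, h (s • x) = 0)
    (g : X →ₗ[k] k) : ∃ f : X →ₗ[S] E, ∀ x, ev (f x) = g x := by
  let ι : E →ₗ[S] Coinduced k S := toCoinduced ev
  have hι : Function.Injective ι := by
    rw [injective_iff_map_eq_zero]
    intro e he
    by_contra hne
    obtain ⟨s, hs⟩ := hdense e hne
    have h1 : (ι e).form s = 1 := by rw [toCoinduced_form, hs, hev]
    rw [he] at h1
    exact zero_ne_one h1
  obtain ⟨ρ, hρ⟩ := hE.out ι hι LinearMap.id
  let γ : X →ₗ[S] Coinduced k S := toCoinduced g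
  let h : X →ₗ[S] Coinduced k S := γ - ι ∘ₗ ρ ∘ₗ γ
  have hh : ∀ x, h x = 0 := by
    by_contra! hcon
    obtain ⟨x, hx, hxJ⟩ := hX h.toAddMonoidHom hcon
    have hxJ' : ∀ s ∈ J, s • h x = 0 := fun s hs => by
      rw [← map_smul]
      exact hxJ s hs
    -- A form vanishing on `J` is a multiple of `ι e₀`.
    have hxe : h x = ι (algebraMap k S ((h x).form 1) • e₀) := by
      apply Coinduced.ext'
      intro t
      obtain ⟨a, t', ht', rfl⟩ := hres t
      have h1 : (h x).form t' = 0 := by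
        have := congrArg (fun f : Coinduced k S => f.form 1) (hxJ' t' ht')
        simp only [Coinduced.smul_form, one_mul] at this
        exact this
      have h2 : t' • algebraMap k S ((h x).form 1) • e₀ = 0 := by
        rw [← mul_smul, ← Algebra.commutes, mul_smul, he₀ t' ht', smul_zero]
      rw [toCoinduced_form, map_add, h1, add_smul, h2, add_zero, add_zero,
        Algebra.algebraMap_eq_smul_one, map_smul]
      simp [hev]
    have hρh : ρ (h x) = 0 := by
      simp only [h, LinearMap.sub_apply, LinearMap.comp_apply, map_sub]
      rw [hρ, LinearMap.id_apply, sub_self]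
    rw [hxe, hρ, LinearMap.id_apply] at hρh
    rw [hρh, map_zero] at hxe
    exact hx hxe
  refine ⟨ρ ∘ₗ γ, fun x => ?_⟩
  have h1 : γ x = ι (ρ (γ x)) := sub_eq_zero.1 (hh x)
  have h2 := congrArg (fun f : Coinduced k S => f.form 1) h1
  simp only [γ, ι, toCoinduced_form, one_smul] at h2
  exact h2.symm

end Comparison

/-- Let `R` be an algebra over a field `k` and `N` an indecomposable Σ-pure-injective
right `R`-module whose (necessarily local) endomorphism ring `S = End_R(N)`, with maximal
ideal `𝔪` (the Jacobson radical), is such that the canonical embedding `k → S/𝔪` is an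
isomorphism.  Then for any injective hull `E` of `S/𝔪`, the local dual `Hom_S(N, E)` is
isomorphic as a left `R`-module to the `k`-dual `Hom_k(N, k)`; in particular `Hom_k(N, k)`
is an indecomposable left `R`-module. -/
theorem localDual_iso_kDual_of_sigmaPureInjective
    (k : Type u) [Field k] (R : Type u) [Ring R] [Algebra k R]
    (N : Type u) [AddCommGroup N] [Module Rᵐᵒᵖ N]
    [Module k N] [IsScalarTower k Rᵐᵒᵖ N] [SMulCommClass k Rᵐᵒᵖ N]
    (hind : IsIndecomposableModule Rᵐᵒᵖ N)
    (hSigma : IsSigmaPureInjective Rᵐᵒᵖ N)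
    [IsLocalRing (Module.End Rᵐᵒᵖ N)]
    (hres : Function.Bijective
      (fun a : k =>
        (Submodule.Quotient.mk (Module.toModuleEnd Rᵐᵒᵖ N a) :
          Module.End Rᵐᵒᵖ N ⧸ Ideal.jacobson (⊥ : Ideal (Module.End Rᵐᵒᵖ N)))))
    (E : Type u) [AddCommGroup E] [Module (Module.End Rᵐᵒᵖ N) E]
    (hEinj : Module.Injective (Module.End Rᵐᵒᵖ N) E)
    (j : (Module.End Rᵐᵒᵖ N ⧸ Ideal.jacobson (⊥ : Ideal (Module.End Rᵐᵒᵖ N)))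
        →ₗ[Module.End Rᵐᵒᵖ N] E)
    (hjinj : Function.Injective j)
    (hess : ∀ K : Submodule (Module.End Rᵐᵒᵖ N) E, K ≠ ⊥ → K ⊓ LinearMap.range j ≠ ⊥) :
    Nonempty ((N →ₗ[Module.End Rᵐᵒᵖ N] E) ≃ₗ[R] (N →ₗ[k] k)) ∧
      IsIndecomposableModule R (N →ₗ[k] k) := by
  let S := Module.End Rᵐᵒᵖ N
  let J : Ideal S := Ideal.jacobson (⊥ : Ideal S)
  have : SMulCommClass Rᵐᵒᵖ k N := SMulCommClass.symm _ _ _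
  have hsurj : ResidueSurjective k R N := fun s => by
    obtain ⟨a, ha⟩ := hres.2 (Submodule.Quotient.mk s)
    refine ⟨a, s - Module.toModuleEnd Rᵐᵒᵖ N a, ?_, (add_sub_cancel _ _).symm⟩
    exact (Submodule.Quotient.eq _).1 ha.symm
  refine ⟨?_, dual_isIndecomposable hSigma hind.1 hsurj⟩
  let _ : Module k E := Module.compHom E (algebraMap k S)
  have : IsScalarTower k S E := IsScalarTower.of_algebraMap_smul fun _ _ => rfl
  let e₀ : E := j (Submodule.Quotient.mk 1)
  have hj : ∀ s : S, j (Submodule.Quotient.mk s) = s • e₀ := fun s => by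
    rw [← map_smul, ← Submodule.Quotient.mk_smul, smul_eq_mul, mul_one]
  have he₀ : ∀ s ∈ J, s • e₀ = 0 := fun s hs => by
    rw [← hj, (Submodule.Quotient.mk_eq_zero _).2 hs, map_zero]
  have he₀ne : e₀ ≠ 0 := fun h0 => by
    have h1 : (Submodule.Quotient.mk (1 : S) : S ⧸ J) = Submodule.Quotient.mk 0 :=
      hjinj (h0.trans (map_zero j).symm)
    refine one_ne_zero (hres.1 (a₁ := (1 : k)) (a₂ := 0) ?_)
    simp only [map_one, map_zero]
    exact h1
  have hdense : ∀ e : E, e ≠ 0 → ∃ s : S, s • e = e₀ := fun e he => by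
    obtain ⟨v, ⟨hvK, q, rfl⟩, hv⟩ := (Submodule.ne_bot_iff _).1
      (hess (Submodule.span S {e}) (by simpa using he))
    obtain ⟨t, ht⟩ := Submodule.mem_span_singleton.1 hvK
    obtain ⟨s, rfl⟩ := Submodule.Quotient.mk_surjective _ q
    obtain ⟨a, s', hs', rfl⟩ := hsurj s
    rw [hj, add_smul, he₀ s' hs', add_zero] at ht hv
    have ha : a ≠ 0 := by
      rintro rfl
      exact hv (by rw [map_zero, zero_smul])
    refine ⟨Module.toModuleEnd Rᵐᵒᵖ N a⁻¹ * t, ?_⟩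
    rw [mul_smul, ht, ← mul_smul, ← map_mul, inv_mul_cancel₀ ha, map_one, one_smul]
  obtain ⟨ev, hev⟩ := exists_dual_apply_eq (k := k) he₀ne 1
  -- The isomorphism is composition with a `k`-linear form `ev` on `E` extending `S/𝔪 ≅ k`.
  let Φ : (N →ₗ[S] E) →ₗ[R] (N →ₗ[k] k) :=
    { toFun := fun f => ev ∘ₗ f.restrictScalars k
      map_add' := fun f f' => LinearMap.ext fun x => map_add ev _ _
      map_smul' := fun r f => rfl }
  refine ⟨LinearEquiv.ofBijective Φ ⟨?_, fun g => ?_⟩⟩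
  · rw [injective_iff_map_eq_zero]
    intro f hf
    ext x
    by_contra hx
    obtain ⟨s, hs⟩ := hdense (f x) hx
    have h1 : ev (f (s • x)) = 0 := LinearMap.congr_fun hf (s • x)
    rw [map_smul, hs, hev] at h1
    exact one_ne_zero h1
  · obtain ⟨f, hf⟩ := exists_lift_of_injective_hull hEinj J hsurj e₀ he₀ hdense ev hev
      (fun h hne => hSigma.exists_radical_killed h hne) g
    exact ⟨f, LinearMap.ext hf⟩
end
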